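/- Let m ≥ 2 and 0 ≤ a ≤ m−2 be integers, and let q be a primitive Nth root of unity with N odd. Then Σ_{n_1,…,n_{2m−2}=0}^{N−1} (−1)^{n_{2m−2}} q^{n_{2m−2}(n_{2m−2}+1)/2 + n_1² + ⋯ + n_{2m−3}² + n_{2a+1} + ⋯ + n_{2m−3}} ∏_{i=1}^{2m−3} [n_{i+1}+δ_{i,2a} choose n_i]_q = 2·Σ_{n_1,…,n_{m−1}=0}^{N−1} (−1)^{n_{m−1}} q^{n_{m−1}(n_{m−1}+1) + 2n_1² + ⋯ + 2n_{m−2}² + 2n_{a+1} + ⋯ + 2n_{m−2}} / (−q;q²)_{n_1+δ_{a,0}} · ∏_{i=1}^{m−2} [n_{i+1}+δ_{i,a} choose n_i]_{q²}. -/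

import Mathlib

open Finset

/-- The q-Pochhammer symbol `(x;q)_n = ∏_{j=0}^{n-1} (1 - x q^j)`. -/
noncomputable def qPoch (x q : ℂ) (n : ℕ) : ℂ := ∏ j ∈ Finset.range n, (1 - x * q ^ j)

/-- The Gaussian binomial coefficient `[n choose k]_q`. -/
noncomputable def qBinom (q : ℂ) (n k : ℕ) : ℂ :=
  if k ≤ n then qPoch q q n / (qPoch q q (n - k) * qPoch q q k) else 0

/-- Extend a tuple `g : Fin k → ℕ` to `ℕ → ℕ` by zero. -/
def pad (k : ℕ) (g : Fin k → ℕ) : ℕ → ℕ := fun j => if h : j < k then g ⟨j, h⟩ else 0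

/-- The general term of the multi-sum `L_m^{(a)}(q)`: here `n j` denotes `n_{j+1}`
(0-based indexing), so `n (m-2)` is `n_{m-1}` and `n 0` is `n_1`. -/
noncomputable def Lterm (m a : ℕ) (q : ℂ) (n : ℕ → ℕ) : ℂ :=
  (-1) ^ (n (m - 2)) *
    q ^ (n (m - 2) * (n (m - 2) + 1) + (∑ j ∈ Finset.range (m - 2), 2 * (n j) ^ 2) +
        ∑ j ∈ Finset.Ico a (m - 2), 2 * n j) /
    qPoch (-q) (q ^ 2) (n 0 + if a = 0 then 1 else 0) *
    ∏ i ∈ Finset.range (m - 2), qBinom (q ^ 2) (n (i + 1) + if i + 1 = a then 1 else 0) (n i)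

/-- The multi-sum `L_m^{(a)}(q)`. -/
noncomputable def L (m a : ℕ) (q : ℂ) : ℂ := ∑' n : Fin (m - 1) → ℕ, Lterm m a q (pad (m - 1) n)

/-- The truncated multi-sum `V_{m,N}^{(a)}(q)`. -/
noncomputable def V (m a N : ℕ) (q : ℂ) : ℂ :=
  ∑ n ∈ Fintype.piFinset (fun _ : Fin (m - 1) => Finset.range N), Lterm m a q (pad (m - 1) n)

/-- The odd periodic function `χ_{2(2m-1)}^{(a)}`. -/
def chiL (m a : ℕ) (k : ℤ) : ℤ :=
  if k % (2 * (2 * m - 1)) = (2 * ((m : ℤ) - a - 1)) % (2 * (2 * m - 1)) then 1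
  else if k % (2 * (2 * m - 1)) = (2 * ((m : ℤ) + a)) % (2 * (2 * m - 1)) then -1
  else 0

/-- The general term of Hikami's multi-sum: here `n j` denotes `n_{j+1}` (0-based indexing). -/
noncomputable def Sterm (m a : ℕ) (q : ℂ) (n : ℕ → ℕ) : ℂ :=
  (-1) ^ (n (m - 2)) *
    q ^ (n (m - 2) * (n (m - 2) + 1) / 2 + (∑ j ∈ Finset.range (m - 2), (n j) ^ 2) +
        ∑ j ∈ Finset.Ico a (m - 2), n j) *
    ∏ i ∈ Finset.range (m - 2), qBinom q (n (i + 1) + if i + 1 = a then 1 else 0) (n i)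


/-! ### Generic part -/

/-- Genericity: `q` is nonzero and no positive power of `q` is `1`. -/
def Gen (q : ℂ) : Prop := q ≠ 0 ∧ ∀ j : ℕ, 1 ≤ j → q ^ j ≠ 1

lemma Gen.sq {q : ℂ} (h : Gen q) : Gen (q ^ 2) := by
  refine ⟨pow_ne_zero _ h.1, fun j hj => ?_⟩
  rw [← pow_mul]
  exact h.2 _ (by omega)

lemma Gen.one_add {q : ℂ} (h : Gen q) (j : ℕ) (hj : 1 ≤ j) : 1 + q ^ j ≠ 0 := by
  intro h0
  apply h.2 (2 * j) (by omega)
  have : q ^ j = -1 := by linear_combination h0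
  rw [mul_comm, pow_mul, this]; norm_num

lemma qPoch_zero (x q : ℂ) : qPoch x q 0 = 1 := by simp [qPoch]

lemma qPoch_succ (x q : ℂ) (n : ℕ) : qPoch x q (n + 1) = qPoch x q n * (1 - x * q ^ n) := by
  simp [qPoch, Finset.prod_range_succ]

lemma Gen.qPoch_ne {q : ℂ} (h : Gen q) (n : ℕ) : qPoch q q n ≠ 0 := by
  rw [qPoch, Finset.prod_ne_zero_iff]
  intro j _ h0
  apply h.2 (j + 1) (by omega)
  rw [pow_succ]; linear_combination -h0

lemma Gen.qPoch_neg_ne {q : ℂ} (h : Gen q) (n : ℕ) : qPoch (-q) q n ≠ 0 := by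
  rw [qPoch, Finset.prod_ne_zero_iff]
  intro j _ h0
  apply h.one_add (j + 1) (by omega)
  rw [pow_succ]; linear_combination h0

lemma Gen.qPoch_odd_ne {q : ℂ} (h : Gen q) (n : ℕ) : qPoch (-q) (q ^ 2) n ≠ 0 := by
  rw [qPoch, Finset.prod_ne_zero_iff]
  intro j _ h0
  apply h.one_add (2 * j + 1) (by omega)
  rw [pow_succ, pow_mul]; linear_combination h0

/-- `1/(q;q)_i`, extended by zero to negative `i`. -/
noncomputable def uu (q : ℂ) (i : ℤ) : ℂ := if 0 ≤ i then (qPoch q q i.toNat)⁻¹ else 0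

lemma uu_neg (q : ℂ) (i : ℤ) (hi : i < 0) : uu q i = 0 := by
  simp [uu, not_le.mpr hi]

lemma uu_nat (q : ℂ) (n : ℕ) : uu q n = (qPoch q q n)⁻¹ := by
  simp [uu]

lemma uu_rec {q : ℂ} (h : Gen q) (i : ℤ) : uu q (i - 1) = (1 - q ^ i) * uu q i := by
  rcases lt_trichotomy i 0 with hi | hi | hi
  · rw [uu_neg _ _ hi, uu_neg _ _ (by omega)]; simp
  · subst hi; rw [uu_neg _ _ (by omega)]; simp
  · obtain ⟨n, rfl⟩ : ∃ n : ℕ, i = (n + 1 : ℕ) := ⟨(i - 1).toNat, by omega⟩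
    have : (((n + 1 : ℕ) : ℤ) - 1) = (n : ℕ) := by push_cast; ring
    rw [this, uu_nat, uu_nat, qPoch_succ, zpow_natCast]
    have h1 := h.qPoch_ne n
    have h2 : 1 - q * q ^ n ≠ 0 := by
      intro h0; apply h.2 (n + 1) (by omega); rw [pow_succ]; linear_combination -h0
    rw [pow_succ, mul_comm (q ^ n) q]
    field_simp

lemma qBinom_eq (q : ℂ) (n k : ℕ) :
    qBinom q n k = qPoch q q n * uu q ((n : ℤ) - k) * uu q k := by
  unfold qBinom
  split_ifs with hk
  · rw [uu_nat, ← Nat.cast_sub hk, uu_nat, div_eq_mul_inv, mul_inv]; ring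
  · rw [uu_neg _ ((n : ℤ) - k) (by omega)]; simp

/-- The Bailey kernel with parameter `a = q^c`. -/
noncomputable def bK (q : ℂ) (c n k : ℕ) : ℂ := qBinom q n k * q ^ (k ^ 2 + c * k)

/-- Diagonal of the intertwined operator. -/
noncomputable def dL (q : ℂ) (c n : ℕ) : ℂ := (q ^ n)⁻¹ + q ^ (c + n)

/-- Subdiagonal of the intertwined operator. -/
noncomputable def eL (q : ℂ) (n : ℕ) : ℂ := 1 - (q ^ n)⁻¹

/-- Left multiplication by the bidiagonal operator. -/
noncomputable def lL (q : ℂ) (c : ℕ) (x : ℕ → ℕ → ℂ) (n k : ℕ) : ℂ :=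
  dL q c n * x n k + eL q n * x (n - 1) k

/-- Right multiplication by the bidiagonal operator. -/
noncomputable def rL (q : ℂ) (c : ℕ) (x : ℕ → ℕ → ℂ) (n k : ℕ) : ℂ :=
  x n k * dL q c k + x n (k + 1) * eL q (k + 1)

lemma eL_zero (q : ℂ) : eL q 0 = 0 := by simp [eL]

lemma bK_comm {q : ℂ} (h : Gen q) (c n k : ℕ) : lL q c (bK q c) n k = rL q c (bK q c) n k := by
  have hq := h.1
  unfold lL rL
  have e1 : eL q n * bK q c (n - 1) k =
      -(q ^ n)⁻¹ * (1 - q ^ n / q ^ k) * bK q c n k := by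
    cases n with
    | zero =>
      rw [eL_zero]
      simp only [bK, qBinom_eq]
      rcases Nat.eq_zero_or_pos k with rfl | hk
      · simp
      · rw [uu_neg q (((0 : ℕ) : ℤ) - k) (by push_cast; omega)]; simp
    | succ m =>
      simp only [bK, qBinom_eq, Nat.add_sub_cancel, eL]
      have := uu_rec h (((m + 1 : ℕ) : ℤ) - k)
      rw [show (((m + 1 : ℕ) : ℤ) - k - 1) = (m : ℤ) - k by push_cast; ring, zpow_sub₀ hq,
        zpow_natCast, zpow_natCast] at this
      rw [this, qPoch_succ]
      field_simp
      ring
  have e2 : bK q c n (k + 1) * eL q (k + 1) =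
      - (q ^ (c + k)) * (1 - q ^ n / q ^ k) * bK q c n k := by
    simp only [bK, qBinom_eq, eL]
    have h1 := uu_rec h ((n : ℤ) - k)
    have h2 := uu_rec h ((k + 1 : ℕ) : ℤ)
    rw [zpow_sub₀ hq, zpow_natCast, zpow_natCast] at h1
    rw [zpow_natCast, show (((k + 1 : ℕ) : ℤ) - 1) = (k : ℤ) by push_cast; ring] at h2
    rw [h2, show ((n : ℤ) - ((k + 1 : ℕ) : ℤ)) = (n : ℤ) - k - 1 by push_cast; ring, h1]
    field_simp
    ring
  rw [e1, e2]
  simp only [dL]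
  field_simp
  ring

/-- The numerator product `(q;q)_{n+1}/(q;q)_{2k+1-n}`. -/
noncomputable def rr (q : ℂ) (n k : ℕ) : ℂ :=
  if n ≤ 2 * k + 1 then ∏ j ∈ Finset.Ico (2 * k + 2 - n) (n + 2), (1 - q ^ j) else 0

/-- The change of base kernel. -/
noncomputable def cK (q : ℂ) (n k : ℕ) : ℂ :=
  (-1) ^ (n + k) * (q ^ (n.choose 2) * q ^ (k * (k + 1)) / (q ^ n * q ^ (2 * n * k))) *
    (qPoch (-q) q (2 * k + 1) / qPoch (-q) q n) *
    (if k ≤ n then rr q n k / qPoch (q ^ 2) (q ^ 2) (n - k) else 0)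

lemma qPoch_self_eq (q : ℂ) (n : ℕ) : qPoch q q n = ∏ j ∈ Finset.Ico 1 (n + 1), (1 - q ^ j) := by
  rw [qPoch, Finset.range_eq_Ico, Finset.prod_Ico_add' (fun j => 1 - q ^ j) 0 n 1 |>.symm]
  · apply Finset.prod_congr (by simp)
    intro j _; rw [pow_succ]; ring

lemma cK_eq {q : ℂ} (h : Gen q) (n k : ℕ) : cK q n k =
    (-1) ^ (n + k) * (q ^ (n.choose 2) * q ^ (k * (k + 1)) / (q ^ n * q ^ (2 * n * k))) *
    (qPoch (-q) q (2 * k + 1) / qPoch (-q) q n) *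
    (qPoch q q (n + 1) * uu q (2 * k + 1 - n) * uu (q ^ 2) ((n : ℤ) - k)) := by
  unfold cK
  congr 1
  split_ifs with hk
  · rw [← Nat.cast_sub hk, uu_nat, div_eq_mul_inv]
    congr 1
    unfold rr
    split_ifs with h2
    · rw [show ((2 : ℤ) * k + 1 - n) = ((2 * k + 1 - n : ℕ) : ℤ) by omega, uu_nat]
      rw [eq_mul_inv_iff_mul_eq₀ (h.qPoch_ne _), qPoch_self_eq, qPoch_self_eq, mul_comm,
        show 2 * k + 1 - n + 1 = 2 * k + 2 - n by omega]
      exact Finset.prod_Ico_consecutive _ (by omega) (by omega)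
    · rw [uu_neg q _ (by omega)]; simp
  · rw [uu_neg (q ^ 2) _ (by omega)]; simp

lemma choose_two_succ (n : ℕ) : (n + 1).choose 2 = n.choose 2 + n := by
  rw [Nat.choose_succ_succ' n 1, Nat.choose_one_right, add_comm]

section base
variable {q : ℂ}

/-- Common factor of the four terms of the intertwining relation. -/
noncomputable def cB (q : ℂ) (m k : ℕ) : ℂ :=
  (-1) ^ (m + k) * (q ^ (m.choose 2) * q ^ (k * (k + 1)) / (q ^ m * q ^ (2 * m * k))) *
    (qPoch (-q) q (2 * k + 1) / qPoch (-q) q m) *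
    (qPoch q q (m + 1) * uu q (2 * k + 1 - m) * uu (q ^ 2) ((m : ℤ) + 2 - k))

lemma cK_base0 (h : Gen q) (m k : ℕ) : cK q m k =
    (1 - (q ^ m) ^ 2 * q ^ 4 / (q ^ k) ^ 2) * (1 - (q ^ m) ^ 2 * q ^ 2 / (q ^ k) ^ 2) *
      cB q m k := by
  have hq := h.1
  rw [cK_eq h, cB]
  have h1 := uu_rec h.sq ((m : ℤ) + 2 - k)
  have h2 := uu_rec h.sq ((m : ℤ) + 1 - k)
  rw [show (m : ℤ) + 2 - k - 1 = m + 1 - k by ring] at h1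
  rw [show (m : ℤ) + 1 - k - 1 = m - k by ring] at h2
  have z1 : (q ^ 2) ^ ((m : ℤ) + 2 - k) = (q ^ m) ^ 2 * q ^ 4 / (q ^ k) ^ 2 := by
    rw [zpow_sub₀ h.sq.1, zpow_add₀ h.sq.1, zpow_natCast, zpow_natCast]
    congr 1
    · norm_cast; ring
    · ring
  have z2 : (q ^ 2) ^ ((m : ℤ) + 1 - k) = (q ^ m) ^ 2 * q ^ 2 / (q ^ k) ^ 2 := by
    rw [zpow_sub₀ h.sq.1, zpow_add₀ h.sq.1, zpow_natCast, zpow_natCast]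
    congr 1
    · norm_cast; ring
    · ring
  rw [h2, h1, z1, z2]
  ring

lemma cK_base1 (h : Gen q) (m k : ℕ) : cK q (m + 1) k =
    - (q ^ m / (q * (q ^ k) ^ 2)) * ((1 - q ^ m * q ^ 2) / (1 + q ^ m * q)) *
    (1 - q * (q ^ k) ^ 2 / q ^ m) * (1 - (q ^ m) ^ 2 * q ^ 4 / (q ^ k) ^ 2) * cB q m k := by
  have hq := h.1
  rw [cK_eq h, cB]
  have h1 := uu_rec h.sq ((m : ℤ) + 2 - k)
  have h2 := uu_rec h (2 * k + 1 - (m : ℤ))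
  rw [show (m : ℤ) + 2 - k - 1 = (m + 1 : ℕ) - k by push_cast; ring] at h1
  rw [show 2 * (k : ℤ) + 1 - m - 1 = 2 * k + 1 - (m + 1 : ℕ) by push_cast; ring] at h2
  have z1 : (q ^ 2) ^ ((m : ℤ) + 2 - k) = (q ^ m) ^ 2 * q ^ 4 / (q ^ k) ^ 2 := by
    rw [zpow_sub₀ h.sq.1, zpow_add₀ h.sq.1, zpow_natCast, zpow_natCast]
    congr 1
    · norm_cast; ring
    · ring
  have z2 : q ^ (2 * k + 1 - (m : ℤ)) = q * (q ^ k) ^ 2 / q ^ m := by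
    rw [zpow_sub₀ hq, zpow_natCast]; congr 1; norm_cast; ring
  rw [h2, h1, z1, z2, choose_two_succ, qPoch_succ (-q) q m, qPoch_succ q q (m + 1)]
  have a1 := h.qPoch_neg_ne m
  have a2 : 1 + q ^ m * q ≠ 0 := by rw [← pow_succ]; exact h.one_add _ (by omega)
  have a3 : 1 - -q * q ^ m ≠ 0 := by convert a2 using 1; ring
  rw [show 2 * (m + 1) * k = 2 * m * k + 2 * k by ring, pow_add q (2 * m * k), pow_add q (m.choose 2)]
  generalize q ^ (m.choose 2) = Z
  generalize q ^ (k * (k + 1)) = V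
  have w : q ^ (2 * m * k) ≠ 0 := pow_ne_zero _ hq
  generalize q ^ (2 * m * k) = W at *
  have b1 : 1 - -q * q ^ m = 1 + q ^ m * q := by ring
  have b3 : q * q ^ (m + 1) = q ^ m * q ^ 2 := by ring
  have b4 : q ^ (m + 1) = q ^ m * q := by ring
  have b6 : q ^ (2 * k) = (q ^ k) ^ 2 := by ring
  rw [b1, b3, b4, b6]
  clear a3 b1 b3 b4 b6 z1 z2 h1 h2
  have x0 : q ^ m ≠ 0 := pow_ne_zero _ hq
  have y0 : q ^ k ≠ 0 := pow_ne_zero _ hq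
  generalize q ^ m = X at *
  generalize q ^ k = Y at *
  field_simp
  ring

lemma cK_base2 (h : Gen q) (m k : ℕ) : cK q (m + 2) k =
    ((q ^ m) ^ 2 / (q * (q ^ k) ^ 4)) * ((1 - q ^ m * q ^ 2) / (1 + q ^ m * q)) *
    ((1 - q ^ m * q ^ 3) / (1 + q ^ m * q ^ 2)) *
    (1 - q * (q ^ k) ^ 2 / q ^ m) * (1 - (q ^ k) ^ 2 / q ^ m) * cB q m k := by
  have hq := h.1
  rw [cK_eq h, cB]
  have h1 := uu_rec h (2 * k - (m : ℤ))
  have h2 := uu_rec h (2 * k + 1 - (m : ℤ))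
  rw [show 2 * (k : ℤ) + 1 - m - 1 = 2 * k - m by ring] at h2
  rw [show 2 * (k : ℤ) - m - 1 = 2 * k + 1 - (m + 2 : ℕ) by push_cast; ring] at h1
  have z2 : q ^ (2 * k + 1 - (m : ℤ)) = q * (q ^ k) ^ 2 / q ^ m := by
    rw [zpow_sub₀ hq, zpow_natCast]; congr 1; norm_cast; ring
  have z1 : q ^ (2 * k - (m : ℤ)) = (q ^ k) ^ 2 / q ^ m := by
    rw [zpow_sub₀ hq, zpow_natCast]; congr 1; norm_cast; ring
  rw [h1, h2, z1, z2, choose_two_succ, choose_two_succ, qPoch_succ (-q) q (m + 1),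
    qPoch_succ (-q) q m, qPoch_succ q q (m + 2), qPoch_succ q q (m + 1)]
  rw [show ((m + 2 : ℕ) : ℤ) - k = (m : ℤ) + 2 - k by push_cast; ring]
  have a1 := h.qPoch_neg_ne m
  have a2 : 1 + q ^ m * q ≠ 0 := by rw [← pow_succ]; exact h.one_add _ (by omega)
  have a3 : 1 - -q * q ^ m ≠ 0 := by convert a2 using 1; ring
  have a4 : 1 + q ^ m * q ^ 2 ≠ 0 := by rw [← pow_add]; exact h.one_add _ (by omega)
  have a5 : 1 - -q * q ^ (m + 1) ≠ 0 := by convert a4 using 1; ring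
  rw [show 2 * (m + 2) * k = 2 * m * k + 4 * k by ring, pow_add q (2 * m * k), pow_add q _ (m + 1),
    pow_add q (m.choose 2)]
  generalize q ^ (m.choose 2) = Z
  generalize q ^ (k * (k + 1)) = V
  have w : q ^ (2 * m * k) ≠ 0 := pow_ne_zero _ hq
  generalize q ^ (2 * m * k) = W at *
  have b1 : 1 - -q * q ^ m = 1 + q ^ m * q := by ring
  have b3 : q * q ^ (m + 1) = q ^ m * q ^ 2 := by ring
  have b4 : q ^ (m + 1) = q ^ m * q := by ring
  have b2 : 1 - -q * q ^ (m + 1) = 1 + q ^ m * q ^ 2 := by ring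
  have b5 : q ^ (m + 2) = q ^ m * q ^ 2 := by ring
  have b6 : q ^ (4 * k) = (q ^ k) ^ 4 := by ring
  rw [b1, b2, b3, b4, b5, b6]
  clear a3 a5 b1 b2 b3 b4 b5 b6 z1 z2 h1 h2
  have x0 : q ^ m ≠ 0 := pow_ne_zero _ hq
  have y0 : q ^ k ≠ 0 := pow_ne_zero _ hq
  generalize q ^ m = X at *
  generalize q ^ k = Y at *
  field_simp
  ring

lemma cK_base3 (h : Gen q) (m k : ℕ) : cK q (m + 2) (k + 1) =
    - (1 / (q ^ 3 * (q ^ k) ^ 2)) * ((1 - q ^ m * q ^ 2) / (1 + q ^ m * q)) *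
    ((1 - q ^ m * q ^ 3) / (1 + q ^ m * q ^ 2)) *
    ((1 + (q ^ k) ^ 2 * q ^ 2) * (1 + (q ^ k) ^ 2 * q ^ 3)) *
    (1 - (q ^ m) ^ 2 * q ^ 4 / (q ^ k) ^ 2) * cB q m k := by
  have hq := h.1
  rw [cK_eq h, cB]
  have h1 := uu_rec h.sq ((m : ℤ) + 2 - k)
  rw [show (m : ℤ) + 2 - k - 1 = (m + 2 : ℕ) - (k + 1 : ℕ) by push_cast; ring] at h1
  have z1 : (q ^ 2) ^ ((m : ℤ) + 2 - k) = (q ^ m) ^ 2 * q ^ 4 / (q ^ k) ^ 2 := by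
    rw [zpow_sub₀ h.sq.1, zpow_add₀ h.sq.1, zpow_natCast, zpow_natCast]
    congr 1
    · norm_cast; ring
    · ring
  rw [h1, z1, choose_two_succ, choose_two_succ, qPoch_succ (-q) q (m + 1),
    qPoch_succ (-q) q m, qPoch_succ q q (m + 2), qPoch_succ q q (m + 1),
    show 2 * (k + 1) + 1 = 2 * k + 1 + 1 + 1 by ring, qPoch_succ (-q) q (2 * k + 1 + 1),
    qPoch_succ (-q) q (2 * k + 1)]
  rw [show 2 * ((k + 1 : ℕ) : ℤ) + 1 - (m + 2 : ℕ) = 2 * k + 1 - m by push_cast; ring]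
  have a1 := h.qPoch_neg_ne m
  have a2 : 1 + q ^ m * q ≠ 0 := by rw [← pow_succ]; exact h.one_add _ (by omega)
  have a3 : 1 - -q * q ^ m ≠ 0 := by convert a2 using 1; ring
  have a4 : 1 + q ^ m * q ^ 2 ≠ 0 := by rw [← pow_add]; exact h.one_add _ (by omega)
  have a5 : 1 - -q * q ^ (m + 1) ≠ 0 := by convert a4 using 1; ring
  rw [show 2 * (m + 2) * (k + 1) = 2 * m * k + (4 * k + 2 * m + 4) by ring,
    pow_add q (2 * m * k), pow_add q _ (m + 1), pow_add q (m.choose 2),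
    show (k + 1) * (k + 1 + 1) = k * (k + 1) + (2 * k + 2) by ring, pow_add q (k * (k + 1))]
  generalize q ^ (m.choose 2) = Z
  generalize q ^ (k * (k + 1)) = V
  have w : q ^ (2 * m * k) ≠ 0 := pow_ne_zero _ hq
  generalize q ^ (2 * m * k) = W at *
  have b1 : 1 - -q * q ^ m = 1 + q ^ m * q := by ring
  have b3 : q * q ^ (m + 1) = q ^ m * q ^ 2 := by ring
  have b4 : q ^ (m + 1) = q ^ m * q := by ring
  have b2 : 1 - -q * q ^ (m + 1) = 1 + q ^ m * q ^ 2 := by ring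
  have b5 : q ^ (m + 2) = q ^ m * q ^ 2 := by ring
  have b6 : q ^ (4 * k + 2 * m + 4) = (q ^ k) ^ 4 * (q ^ m) ^ 2 * q ^ 4 := by ring
  have b7 : q ^ (2 * k + 2) = (q ^ k) ^ 2 * q ^ 2 := by ring
  have b8 : q ^ (2 * k + 1) = (q ^ k) ^ 2 * q := by ring
  rw [b1, b2, b3, b4, b5, b6, b7, b8]
  clear a3 a5 b1 b2 b3 b4 b5 b6 b7 b8 z1 h1
  have x0 : q ^ m ≠ 0 := pow_ne_zero _ hq
  have y0 : q ^ k ≠ 0 := pow_ne_zero _ hq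
  generalize q ^ m = X at *
  generalize q ^ k = Y at *
  field_simp
  ring

end base

/-! ### Intertwining relations -/

lemma cK_zero_of_lt (q : ℂ) (n k : ℕ) (hk : n < k) : cK q n k = 0 := by
  simp [cK, not_le.mpr hk]

lemma cK_zero_of_big (q : ℂ) (n k : ℕ) (hk : 2 * k + 1 < n) : cK q n k = 0 := by
  simp [cK, rr, not_le.mpr hk]

lemma cK_00 (q : ℂ) : cK q 0 0 = 1 + q := by
  simp [cK, rr, qPoch]

lemma cK_10 {q : ℂ} (h : Gen q) : cK q 1 0 = -(1 - q) / q := by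
  have h1 := h.one_add 1 le_rfl
  have h2 : 1 - q ^ 2 ≠ 0 := by
    intro h0; exact h.2 2 (by omega) (by linear_combination -h0)
  have hq := h.1
  rw [pow_one] at h1
  have : Finset.Ico 1 3 = {1, 2} := by decide
  simp [cK, rr, qPoch, this, hq]
  field_simp
  ring

lemma cK_11 {q : ℂ} (h : Gen q) : cK q 1 1 = (1 + q ^ 2) * (1 + q ^ 3) / q := by
  have h1 := h.one_add 1 le_rfl
  have hq := h.1
  rw [pow_one] at h1
  simp [cK, rr, qPoch, Finset.prod_range_succ]
  field_simp

lemma cK_inter {q : ℂ} (h : Gen q) (n k : ℕ) :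
    rL (q ^ 2) 1 (cK q) n k = lL q 1 (lL q 1 (cK q)) n k - 2 * q ^ 1 * cK q n k := by
  have hq := h.1
  match n with
  | 0 =>
    match k with
    | 0 =>
      simp only [rL, lL, eL_zero, cK_zero_of_lt q 0 (0 + 1) (by omega), dL]
      rw [cK_00]; field_simp; ring
    | k + 1 =>
      simp only [rL, lL, eL_zero, cK_zero_of_lt q 0 (k + 1) (by omega),
        cK_zero_of_lt q 0 (k + 1 + 1) (by omega)]
      ring
  | 1 =>
    match k with
    | 0 =>
      simp only [rL, lL, eL_zero, dL, eL, Nat.sub_self, zero_add]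
      rw [cK_00, cK_10 h, cK_11 h]; field_simp; ring
    | 1 =>
      simp only [rL, lL, eL_zero, cK_zero_of_lt q 0 1 (by omega),
        cK_zero_of_lt q 1 (1 + 1) (by omega), dL, eL, Nat.sub_self]
      rw [cK_11 h]; field_simp; ring
    | k + 2 =>
      simp only [rL, lL, Nat.sub_self, cK_zero_of_lt q 0 (k + 2) (by omega),
        cK_zero_of_lt q 1 (k + 2) (by omega),
        cK_zero_of_lt q 1 (k + 2 + 1) (by omega)]
      ring
  | m + 2 =>
    simp only [rL, lL, show m + 2 - 1 = m + 1 by omega, show m + 1 - 1 = m by omega]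
    rw [cK_base0 h m k, cK_base1 h m k, cK_base2 h m k, cK_base3 h m k]
    generalize cB q m k = T
    simp only [dL, eL]
    have a2 : 1 + q ^ m * q ≠ 0 := by rw [← pow_succ]; exact h.one_add _ (by omega)
    have a4 : 1 + q ^ m * q ^ 2 ≠ 0 := by rw [← pow_add]; exact h.one_add _ (by omega)
    have x0 : q ^ m ≠ 0 := pow_ne_zero _ hq
    have y0 : q ^ k ≠ 0 := pow_ne_zero _ hq
    rw [show (q ^ 2) ^ k = (q ^ k) ^ 2 by ring, show (q ^ 2) ^ (1 + k) = (q ^ k) ^ 2 * q ^ 2 by ring,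
      show (q ^ 2) ^ (k + 1) = (q ^ k) ^ 2 * q ^ 2 by ring,
      show q ^ (1 + (m + 2)) = q ^ m * q ^ 3 by ring,
      show q ^ (1 + (m + 1)) = q ^ m * q ^ 2 by ring,
      show q ^ (m + 2) = q ^ m * q ^ 2 by ring,
      show q ^ (m + 1) = q ^ m * q by ring]
    generalize q ^ m = X at *
    generalize q ^ k = Y at *
    field_simp
    ring

/-- The change of base kernel for `a = 1`. -/
noncomputable def hK (q : ℂ) (n k : ℕ) : ℂ :=
  match n, k with
  | 0, 0 => 1
  | 0, _ + 1 => 0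
  | _ + 1, 0 => 0
  | n + 1, k + 1 => cK q n k

lemma hK_zero_of_lt (q : ℂ) (n k : ℕ) (hk : n < k) : hK q n k = 0 := by
  match n, k with
  | 0, 0 => omega
  | 0, _ + 1 => rfl
  | _ + 1, 0 => rfl
  | n + 1, k + 1 => exact cK_zero_of_lt q n k (by omega)

lemma hK_inter {q : ℂ} (h : Gen q) (n k : ℕ) :
    rL (q ^ 2) 0 (hK q) n k = lL q 0 (lL q 0 (hK q)) n k - 2 * q ^ 0 * hK q n k := by
  have hq := h.1
  match n, k with
  | 0, 0 => simp [rL, lL, eL_zero, dL, hK]; norm_num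
  | 0, k + 1 => simp [rL, lL, eL_zero, hK]
  | 1, 0 =>
    simp only [rL, lL, eL_zero, dL, eL, hK, Nat.sub_self, zero_add]
    rw [cK_00]; field_simp; ring
  | 2, 0 =>
    simp only [rL, lL, eL_zero, dL, eL, hK, Nat.sub_self, zero_add, show 2 - 1 = 1 by rfl]
    rw [cK_10 h]; field_simp; ring
  | m + 3, 0 =>
    simp only [rL, lL, hK, zero_add, show m + 3 - 1 = m + 2 by rfl, show m + 2 - 1 = m + 1 by rfl,
      cK_zero_of_big q (m + 2) 0 (by omega)]
    ring
  | 1, 1 =>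
    simp only [rL, lL, eL_zero, dL, eL, hK, Nat.sub_self, cK_zero_of_lt q 0 1 (by omega)]
    rw [cK_00]; field_simp; ring
  | 1, k + 2 =>
    simp only [rL, lL, hK, eL_zero, Nat.sub_self, cK_zero_of_lt q 0 (k + 1) (by omega),
      cK_zero_of_lt q 0 (k + 2) (by omega)]
    ring
  | 2, 1 =>
    simp only [rL, lL, dL, eL, hK, Nat.sub_self, show 2 - 1 = 1 by rfl]
    rw [cK_00, cK_10 h, cK_11 h]; field_simp; ring
  | 2, 2 =>
    simp only [rL, lL, dL, eL, hK, Nat.sub_self, show 2 - 1 = 1 by rfl,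
      cK_zero_of_lt q 0 1 (by omega), cK_zero_of_lt q 1 2 (by omega)]
    rw [cK_11 h]; field_simp; ring
  | 2, k + 3 =>
    simp only [rL, lL, dL, eL, hK, Nat.sub_self, show 2 - 1 = 1 by rfl,
      cK_zero_of_lt q 0 (k + 2) (by omega), cK_zero_of_lt q 1 (k + 2) (by omega),
      cK_zero_of_lt q 1 (k + 3) (by omega)]
    ring
  | m + 3, k + 1 =>
    simp only [rL, lL, hK, show m + 3 - 1 = m + 2 by rfl, show m + 2 - 1 = m + 1 by rfl]
    rw [cK_base0 h m k, cK_base1 h m k, cK_base2 h m k, cK_base3 h m k]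
    generalize cB q m k = T
    simp only [dL, eL]
    have a2 : 1 + q ^ m * q ≠ 0 := by rw [← pow_succ]; exact h.one_add _ (by omega)
    have a4 : 1 + q ^ m * q ^ 2 ≠ 0 := by rw [← pow_add]; exact h.one_add _ (by omega)
    have x0 : q ^ m ≠ 0 := pow_ne_zero _ hq
    have y0 : q ^ k ≠ 0 := pow_ne_zero _ hq
    simp only [zero_add]
    rw [show (q ^ 2) ^ (k + 1) = (q ^ k) ^ 2 * q ^ 2 by ring,
      show (q ^ 2) ^ (k + 1 + 1) = (q ^ k) ^ 2 * q ^ 4 by ring,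
      show q ^ (m + 3) = q ^ m * q ^ 3 by ring,
      show q ^ (m + 2) = q ^ m * q ^ 2 by ring]
    generalize q ^ m = X at *
    generalize q ^ k = Y at *
    field_simp
    ring

/-! ### Kernel products and uniqueness -/

/-- Truncated kernel product. -/
noncomputable def kp (N : ℕ) (x y : ℕ → ℕ → ℂ) (n k : ℕ) : ℂ :=
  ∑ j ∈ Finset.range N, x n j * y j k

/-- Lower triangular kernels. -/
def LowT (x : ℕ → ℕ → ℂ) : Prop := ∀ n k, n < k → x n k = 0

lemma lL_kp (q : ℂ) (c N : ℕ) (x y : ℕ → ℕ → ℂ) (n k : ℕ) :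
    lL q c (kp N x y) n k = kp N (lL q c x) y n k := by
  simp only [lL, kp, Finset.mul_sum, ← Finset.sum_add_distrib]
  apply Finset.sum_congr rfl; intros; ring

lemma rL_kp (q : ℂ) (c N : ℕ) (x y : ℕ → ℕ → ℂ) (n k : ℕ) :
    rL q c (kp N x y) n k = kp N x (rL q c y) n k := by
  simp only [rL, kp, Finset.sum_mul, ← Finset.sum_add_distrib]
  apply Finset.sum_congr rfl; intros; ring

lemma kp_shift (q : ℂ) (c N : ℕ) (x y : ℕ → ℕ → ℂ) (hx : LowT x) (n k : ℕ) (hn : n < N) :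
    kp N (rL q c x) y n k = kp N x (lL q c y) n k := by
  have h1 := Finset.sum_range_succ' (fun j => x n j * eL q j * y (j - 1) k) N
  have h2 := Finset.sum_range_succ (fun j => x n j * eL q j * y (j - 1) k) N
  simp only [eL_zero, hx n N hn, Nat.add_sub_cancel] at h1 h2
  simp only [kp, rL, lL]
  have e1 : ∀ j, (x n j * dL q c j + x n (j + 1) * eL q (j + 1)) * y j k =
    x n j * dL q c j * y j k + x n (j + 1) * eL q (j + 1) * y j k := fun j => by ring
  have e2 : ∀ j, x n j * (dL q c j * y j k + eL q j * y (j - 1) k) =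
    x n j * dL q c j * y j k + x n j * eL q j * y (j - 1) k := fun j => by ring
  simp only [e1, e2, Finset.sum_add_distrib]
  linear_combination h2 - h1

lemma kp_congr_right (N : ℕ) (x y z : ℕ → ℕ → ℂ) (n k : ℕ)
    (h : ∀ j, j < N → y j k = z j k) : kp N x y n k = kp N x z n k := by
  unfold kp; apply Finset.sum_congr rfl
  intro j hj; rw [h j (Finset.mem_range.mp hj)]

lemma lL_congr (q : ℂ) (c N : ℕ) (x y : ℕ → ℕ → ℂ) (n k : ℕ) (hn : n < N)
    (h : ∀ j, j < N → x j k = y j k) : lL q c x n k = lL q c y n k := by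
  unfold lL; rw [h n hn, h (n - 1) (by omega)]

lemma kp_low {N : ℕ} {x y : ℕ → ℕ → ℂ} (hx : LowT x) (hy : LowT y) : LowT (kp N x y) := by
  intro n k hnk
  unfold kp; apply Finset.sum_eq_zero
  intro j _
  by_cases hj : n < j
  · rw [hx n j hj, zero_mul]
  · rw [hy j k (by omega), mul_zero]

lemma kp_diag {N : ℕ} {x y : ℕ → ℕ → ℂ} (hx : LowT x) (hy : LowT y) (n : ℕ) (hn : n < N) :
    kp N x y n n = x n n * y n n := by
  unfold kp; apply Finset.sum_eq_single n
  · intro j _ hj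
    rcases lt_or_gt_of_ne hj with h | h
    · rw [hy j n h, mul_zero]
    · rw [hx n j h, zero_mul]
  · intro h; exact absurd (Finset.mem_range.mpr hn) h

lemma bK_low (q : ℂ) (c : ℕ) : LowT (bK q c) := by
  intro n k h; simp [bK, qBinom, not_le.mpr h]

lemma bK_diag {q : ℂ} (h : Gen q) (c n : ℕ) : bK q c n n = q ^ (n ^ 2 + c * n) := by
  simp [bK, qBinom, qPoch_zero, h.qPoch_ne n]

lemma kp_bK_lL {q : ℂ} (h : Gen q) (c N : ℕ) (y : ℕ → ℕ → ℂ) (n k : ℕ) (hn : n < N) :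
    kp N (bK q c) (lL q c y) n k = lL q c (kp N (bK q c) y) n k := by
  rw [← kp_shift _ _ _ _ _ (bK_low q c) _ _ hn, lL_kp]
  unfold kp
  simp only [← bK_comm h]

lemma inter_unique {q : ℂ} (h : Gen q) (c N : ℕ) (D : ℕ → ℕ → ℂ) (hD : LowT D)
    (hd : ∀ n, n < N → D n n = 0)
    (hr : ∀ n k, n < N → rL (q ^ 2) c D n k = lL q c (lL q c D) n k - 2 * q ^ c * D n k) :
    ∀ n k, n < N → D n k = 0 := by
  have key : ∀ d n k, n < N → n ≤ k + d → D n k = 0 := by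
    intro d
    induction d with
    | zero =>
      intro n k hn hk
      rcases Nat.lt_or_ge n k with h1 | h1
      · exact hD n k h1
      · obtain rfl : n = k := by omega
        exact hd n hn
    | succ d ih =>
      intro n k hn hk
      rcases Nat.lt_or_ge k n with h1 | h1
      swap
      · exact ih n k hn (by omega)
      have := hr n k hn
      simp only [rL, lL] at this
      rw [ih n (k + 1) hn (by omega), ih (n - 1) k (by omega) (by omega),
        ih (n - 1 - 1) k (by omega) (by omega)] at this
      have hq := h.1
      have e : (dL (q ^ 2) c k - dL q c n ^ 2 + 2 * q ^ c) * D n k = 0 := by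
        linear_combination this
      rcases mul_eq_zero.mp e with e | e
      swap
      · exact e
      exfalso
      obtain ⟨p, rfl⟩ : ∃ p, n = k + p := ⟨n - k, by omega⟩
      have a1 : 1 - (q ^ 2) ^ p ≠ 0 := fun h0 => h.sq.2 p (by omega) (by linear_combination -h0)
      have a2 : 1 - (q ^ 2) ^ (c + (k + p) + k) ≠ 0 :=
        fun h0 => h.sq.2 (c + (k + p) + k) (by omega) (by linear_combination -h0)
      have : (1 - (q ^ 2) ^ p) * (1 - (q ^ 2) ^ (c + (k + p) + k)) = 0 := by
        have e' : (1 - (q ^ 2) ^ p) * (1 - (q ^ 2) ^ (c + (k + p) + k)) =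
          -(dL (q ^ 2) c k - dL q c (k + p) ^ 2 + 2 * q ^ c) * (q ^ 2) ^ (k + p) := by
          simp only [dL, pow_add, ← pow_mul, mul_comm 2]
          simp only [pow_mul]
          have x0 : q ^ k ≠ 0 := pow_ne_zero _ hq
          have y0 : q ^ p ≠ 0 := pow_ne_zero _ hq
          generalize q ^ k = X at *
          generalize q ^ p = Y at *
          generalize q ^ c = Z at *
          field_simp
          ring
        rw [e', e]; simp
      exact mul_ne_zero a1 a2 this
  intro n k hn
  exact key n n k hn (by omega)

lemma change_base {q : ℂ} (h : Gen q) (c N : ℕ) (C : ℕ → ℕ → ℂ) (hC : LowT C)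
    (hr : ∀ n k, rL (q ^ 2) c C n k = lL q c (lL q c C) n k - 2 * q ^ c * C n k) :
    ∀ n k, n < N → kp N (bK q c) (kp N (bK q c) C) n k = kp N C (bK (q ^ 2) c) n k := by
  have hB := bK_low q c
  have hBC : LowT (kp N (bK q c) C) := kp_low hB hC
  have hW : LowT (kp N (bK q c) (kp N (bK q c) C)) := kp_low hB hBC
  have hZ : LowT (kp N C (bK (q ^ 2) c)) := kp_low hC (bK_low _ _)
  have rW : ∀ n k, n < N → rL (q ^ 2) c (kp N (bK q c) (kp N (bK q c) C)) n k =
      lL q c (lL q c (kp N (bK q c) (kp N (bK q c) C))) n k -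
        2 * q ^ c * kp N (bK q c) (kp N (bK q c) C) n k := by
    intro n k hn
    have s1 : lL q c (lL q c (kp N (bK q c) (kp N (bK q c) C))) n k =
        kp N (bK q c) (kp N (bK q c) (lL q c (lL q c C))) n k := by
      rw [lL_congr q c N _ (kp N (bK q c) (lL q c (kp N (bK q c) C))) n k hn
        (fun j hj => (kp_bK_lL h c N _ j k hj).symm), ← kp_bK_lL h c N _ n k hn]
      apply kp_congr_right
      intro j hj
      rw [lL_congr q c N _ (kp N (bK q c) (lL q c C)) j k hj
        (fun i hi => (kp_bK_lL h c N _ i k hi).symm), ← kp_bK_lL h c N _ j k hj]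
    rw [s1, rL_kp]
    have s2 : kp N (bK q c) (rL (q ^ 2) c (kp N (bK q c) C)) n k =
        kp N (bK q c) (kp N (bK q c) (rL (q ^ 2) c C)) n k :=
      kp_congr_right _ _ _ _ _ _ (fun j _ => rL_kp _ _ _ _ _ _ _)
    rw [s2]
    simp only [kp, hr, mul_sub, Finset.mul_sum, Finset.sum_sub_distrib]
    congr 1
    apply Finset.sum_congr rfl; intro i _
    apply Finset.sum_congr rfl; intro j _
    ring
  have rZ : ∀ n k, n < N → rL (q ^ 2) c (kp N C (bK (q ^ 2) c)) n k =
      lL q c (lL q c (kp N C (bK (q ^ 2) c))) n k - 2 * q ^ c * kp N C (bK (q ^ 2) c) n k := by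
    intro n k hn
    have s0 : kp N C (rL (q ^ 2) c (bK (q ^ 2) c)) n k = kp N C (lL (q ^ 2) c (bK (q ^ 2) c)) n k :=
      kp_congr_right _ _ _ _ _ _ (fun j _ => (bK_comm h.sq c j k).symm)
    rw [rL_kp, s0, ← kp_shift _ _ _ _ _ hC _ _ hn]
    rw [show lL q c (kp N C (bK (q ^ 2) c)) = kp N (lL q c C) (bK (q ^ 2) c) from
      funext fun i => funext fun j => lL_kp _ _ _ _ _ _ _, lL_kp]
    simp only [kp, hr, sub_mul, Finset.mul_sum, Finset.sum_sub_distrib]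
    congr 1
    apply Finset.sum_congr rfl; intro i _
    ring
  intro n k hn
  rw [← sub_eq_zero]
  refine inter_unique h c N (fun n k => kp N (bK q c) (kp N (bK q c) C) n k -
    kp N C (bK (q ^ 2) c) n k) ?_ ?_ ?_ n k hn
  · intro n k hnk; simp only [hW n k hnk, hZ n k hnk, sub_zero]
  · intro n hn
    simp only [kp_diag hB hBC n hn, kp_diag hB hC n hn, kp_diag hC (bK_low _ _) n hn,
      bK_diag h, bK_diag h.sq, ← pow_mul]
    ring
  · intro n k hn
    have a := rW n k hn
    have b := rZ n k hn
    simp only [rL, lL] at a b ⊢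
    linear_combination a - b

/-! ### The summation formula for the change of base kernel -/

lemma qPoch_split (q : ℂ) (k : ℕ) :
    qPoch (-q) q (2 * k + 1) = qPoch (-q) (q ^ 2) (k + 1) * qPoch (-q ^ 2) (q ^ 2) k := by
  induction k with
  | zero => simp [qPoch]
  | succ k ih =>
    rw [show 2 * (k + 1) + 1 = 2 * k + 1 + 1 + 1 by ring, qPoch_succ _ _ (2 * k + 1 + 1),
      qPoch_succ _ _ (2 * k + 1), ih, qPoch_succ (-q) _ (k + 1), qPoch_succ (-q ^ 2) _ k]
    ring

/-- The summand of the summation formula. -/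
noncomputable def Fk (q : ℂ) (n k : ℕ) : ℂ :=
  (-1) ^ (n + k) * (q ^ (n.choose 2) * q ^ (k * (k + 1)) / (q ^ n * q ^ (2 * n * k))) *
    (qPoch (-q ^ 2) (q ^ 2) k / qPoch (-q) q n) *
    (qPoch q q (n + 1) * uu q (2 * k + 1 - n) * uu (q ^ 2) ((n : ℤ) - k))

/-- The telescoping certificate. -/
noncomputable def Gk (q : ℂ) (n k : ℕ) : ℂ :=
  (-1) ^ (n + k) * (q ^ (n.choose 2) * q ^ (k * (k + 1)) / (q ^ n * q ^ (2 * n * k))) *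
    (q * (q ^ n) ^ 3 / (q ^ k) ^ 4) *
    (qPoch (-q ^ 2) (q ^ 2) k / qPoch (-q) q (n + 1)) *
    (qPoch q q (n + 1) * uu q (2 * k - 1 - n) * uu (q ^ 2) ((n : ℤ) + 1 - k))

lemma cK_div {q : ℂ} (h : Gen q) (n k : ℕ) :
    cK q n k / qPoch (-q) (q ^ 2) (k + 1) = Fk q n k := by
  rw [cK_eq h, qPoch_split, Fk]
  have := h.qPoch_odd_ne (k + 1)
  generalize qPoch (-q) (q ^ 2) (k + 1) = A at *
  have e : ∀ x b c y : ℂ, x * (A * b / c) * y / A = x * (b / c) * y := by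
    intro x b c y
    rw [div_eq_iff this]; ring
  exact e _ _ _ _

lemma FG {q : ℂ} (h : Gen q) (n k : ℕ) :
    Fk q (n + 1) k - Fk q n k = Gk q n (k + 1) - Gk q n k := by
  have hq := h.1
  simp only [Fk, Gk]
  have h1 := uu_rec h.sq ((n : ℤ) + 1 - k)
  have h2 := uu_rec h (2 * k + 1 - (n : ℤ))
  have h3 := uu_rec h (2 * k - (n : ℤ))
  rw [show (n : ℤ) + 1 - k - 1 = n - k by ring] at h1
  rw [show 2 * (k : ℤ) + 1 - n - 1 = 2 * k - n by ring] at h2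
  rw [show 2 * (k : ℤ) - n - 1 = 2 * k - 1 - n by ring] at h3
  have z1 : (q ^ 2) ^ ((n : ℤ) + 1 - k) = (q ^ n) ^ 2 * q ^ 2 / (q ^ k) ^ 2 := by
    rw [zpow_sub₀ h.sq.1, zpow_add₀ h.sq.1, zpow_natCast, zpow_natCast]
    congr 1
    · norm_cast; ring
    · ring
  have z2 : q ^ (2 * k + 1 - (n : ℤ)) = q * (q ^ k) ^ 2 / q ^ n := by
    rw [zpow_sub₀ hq, zpow_natCast]; congr 1; norm_cast; ring
  have z3 : q ^ (2 * k - (n : ℤ)) = (q ^ k) ^ 2 / q ^ n := by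
    rw [zpow_sub₀ hq, zpow_natCast]; congr 1; norm_cast; ring
  rw [show 2 * (k : ℤ) + 1 - (n + 1 : ℕ) = 2 * k - n by push_cast; ring,
    show ((n + 1 : ℕ) : ℤ) - k = n + 1 - k by push_cast; ring,
    show 2 * ((k + 1 : ℕ) : ℤ) - 1 - n = 2 * k + 1 - n by push_cast; ring,
    show (n : ℤ) + 1 - (k + 1 : ℕ) = n - k by push_cast; ring]
  rw [h3, h1, h2, z1, z2, z3, choose_two_succ, qPoch_succ (-q) q n, qPoch_succ q q (n + 1),
    qPoch_succ (-q ^ 2) (q ^ 2) k]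
  have a1 := h.qPoch_neg_ne n
  have a2 : 1 + q ^ n * q ≠ 0 := by rw [← pow_succ]; exact h.one_add _ (by omega)
  rw [show 2 * (n + 1) * k = 2 * n * k + 2 * k by ring, pow_add q (2 * n * k),
    pow_add q (n.choose 2), show 2 * n * (k + 1) = 2 * n * k + 2 * n by ring,
    pow_add q (2 * n * k),
    show (k + 1) * (k + 1 + 1) = k * (k + 1) + (2 * k + 2) by ring, pow_add q (k * (k + 1))]
  generalize q ^ (n.choose 2) = Z
  generalize q ^ (k * (k + 1)) = V
  have w : q ^ (2 * n * k) ≠ 0 := pow_ne_zero _ hq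
  generalize q ^ (2 * n * k) = W at *
  generalize uu q (2 * k + 1 - n) = U1
  generalize uu (q ^ 2) (n + 1 - k) = U2
  have b1 : 1 - -q * q ^ n = 1 + q ^ n * q := by ring
  have b3 : q * q ^ (n + 1) = q ^ n * q ^ 2 := by ring
  have b4 : q ^ (n + 1) = q ^ n * q := by ring
  have b5 : q ^ (k + 1) = q ^ k * q := by ring
  have b6 : q ^ (2 * k) = (q ^ k) ^ 2 := by ring
  have b7 : q ^ (2 * n) = (q ^ n) ^ 2 := by ring
  have b8 : q ^ (2 * k + 2) = (q ^ k) ^ 2 * q ^ 2 := by ring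
  have b9 : (q ^ 2) ^ k = (q ^ k) ^ 2 := by ring
  rw [b1, b3, b4, b5, b6, b7, b8, b9]
  clear b1 b3 b4 b5 b6 b7 b8 b9 z1 z2 z3 h1 h2 h3
  have x0 : q ^ n ≠ 0 := pow_ne_zero _ hq
  have y0 : q ^ k ≠ 0 := pow_ne_zero _ hq
  generalize q ^ n = X at *
  generalize q ^ k = Y at *
  field_simp
  ring

lemma Fk_sum {q : ℂ} (h : Gen q) (n : ℕ) : ∑ k ∈ Finset.range (n + 1), Fk q n k = 1 := by
  induction n with
  | zero =>
    have h1 := uu_nat q 1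
    have h0 := uu_nat (q ^ 2) 0
    have h2 := h.qPoch_ne 1
    rw [qPoch_zero] at h0
    push_cast at h1 h0
    simp [Fk, h1, h0, qPoch_zero, h2]
  | succ n ih =>
    have e : ∀ k, Fk q (n + 1) k = Fk q n k + (Gk q n (k + 1) - Gk q n k) := fun k => by
      rw [← FG h]; ring
    simp only [e]
    rw [Finset.sum_add_distrib, Finset.sum_range_sub, Finset.sum_range_succ, ih]
    have f1 : Fk q n (n + 1) = 0 := by
      rw [Fk, uu_neg (q ^ 2) _ (by push_cast; omega)]; simp
    have g1 : Gk q n (n + 1 + 1) = 0 := by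
      rw [Gk, uu_neg (q ^ 2) _ (by push_cast; omega)]; simp
    have g0 : Gk q n 0 = 0 := by
      rw [Gk, uu_neg q _ (by push_cast; omega)]; simp
    rw [f1, g1, g0]; simp

lemma cK_sum {q : ℂ} (h : Gen q) (N n : ℕ) (hn : n < N) :
    ∑ k ∈ Finset.range N, cK q n k / qPoch (-q) (q ^ 2) (k + 1) = 1 := by
  rw [← Fk_sum h n]
  symm
  simp only [← cK_div h]
  apply Finset.sum_subset
  · intro x; simp only [Finset.mem_range]; omega
  · intro x _ hx
    rw [cK_zero_of_lt q n x (by simpa using hx)]; simp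

/-! ### Passing to roots of unity -/

/-- Primitive roots of unity of odd order. -/
def IsR (q : ℂ) (N : ℕ) : Prop := IsPrimitiveRoot q N ∧ Odd N

section rootlim
variable {q : ℂ} {N : ℕ}

lemma IsR.pos (h : IsR q N) : 0 < N := h.2.pos

lemma IsR.ne_zero (h : IsR q N) : q ≠ 0 := h.1.ne_zero h.pos.ne'

lemma IsR.sq (h : IsR q N) : IsR (q ^ 2) N :=
  ⟨h.1.pow_of_coprime 2 (Nat.coprime_two_left.mpr h.2), h.2⟩

lemma IsR.one_sub (h : IsR q N) (j : ℕ) (h1 : 1 ≤ j) (h2 : j < N) : 1 - q ^ j ≠ 0 := by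
  intro h0
  exact h.1.pow_ne_one_of_pos_of_lt (by omega) h2 (by linear_combination -h0)

lemma IsR.one_add (h : IsR q N) (j : ℕ) : 1 + q ^ j ≠ 0 := by
  intro h0
  have e : q ^ j = -1 := by linear_combination h0
  have e2 : (q ^ 2) ^ j = 1 := by rw [← pow_mul, mul_comm, pow_mul, e]; norm_num
  have := (h.1.pow_eq_one_iff_dvd j).mpr ((h.sq.1.pow_eq_one_iff_dvd j).mp e2)
  rw [e] at this
  norm_num at this

lemma IsR.qPoch_ne (h : IsR q N) (n : ℕ) (hn : n < N) : qPoch q q n ≠ 0 := by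
  rw [qPoch, Finset.prod_ne_zero_iff]
  intro j hj h0
  rw [Finset.mem_range] at hj
  apply h.one_sub (j + 1) (by omega) (by omega)
  rw [pow_succ]; linear_combination h0

lemma IsR.qPoch_neg_ne (h : IsR q N) (n : ℕ) : qPoch (-q) q n ≠ 0 := by
  rw [qPoch, Finset.prod_ne_zero_iff]
  intro j _ h0
  apply h.one_add (j + 1)
  rw [pow_succ]; linear_combination h0

lemma IsR.qPoch_odd_ne (h : IsR q N) (n : ℕ) : qPoch (-q) (q ^ 2) n ≠ 0 := by
  rw [qPoch, Finset.prod_ne_zero_iff]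
  intro j _ h0
  apply h.one_add (2 * j + 1)
  rw [pow_succ, pow_mul]; linear_combination h0

lemma IsR.mem_closure (h : IsR q N) : q ∈ closure {z : ℂ | Gen z} := by
  have hn : ‖q‖ = 1 := h.1.norm'_eq_one h.pos.ne'
  have t0 : Filter.Tendsto (fun n : ℕ => (1 - 1 / ((n : ℂ) + 1)) * q) Filter.atTop (nhds q) := by
    have := (tendsto_one_div_add_atTop_nhds_zero_nat (𝕜 := ℂ)).const_sub 1 |>.mul_const q
    simpa using this
  refine mem_closure_of_tendsto t0 ?_
  filter_upwards [Filter.eventually_ge_atTop 1] with n hn1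
  have hpos : (0 : ℝ) < n := by exact_mod_cast hn1
  have e : (1 - 1 / ((n : ℂ) + 1)) = ((n / (n + 1) : ℝ) : ℂ) := by
    have : (n : ℂ) + 1 ≠ 0 := by exact_mod_cast (by omega : n + 1 ≠ 0)
    push_cast; field_simp; ring
  rw [e]
  have lt1 : (n / (n + 1) : ℝ) < 1 := by rw [div_lt_one (by linarith)]; linarith
  have gt0 : 0 < (n / (n + 1) : ℝ) := by positivity
  refine ⟨mul_ne_zero (by exact_mod_cast gt0.ne') h.ne_zero, fun j hj h0 => ?_⟩
  have : ‖(((n / (n + 1) : ℝ) : ℂ) * q) ^ j‖ < 1 := by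
    rw [norm_pow, norm_mul, hn, mul_one, Complex.norm_real, Real.norm_of_nonneg gt0.le]
    exact pow_lt_one₀ gt0.le lt1 (by omega)
  rw [h0] at this
  simp at this

lemma IsR.lim (h : IsR q N) (f g : ℂ → ℂ) (hf : ContinuousAt f q) (hg : ContinuousAt g q)
    (hfg : ∀ z, Gen z → f z = g z) : f q = g q := by
  have : (nhdsWithin q {z : ℂ | Gen z}).NeBot := mem_closure_iff_nhdsWithin_neBot.mp h.mem_closure
  have h1 : Filter.Tendsto f (nhdsWithin q {z : ℂ | Gen z}) (nhds (f q)) :=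
    hf.tendsto.mono_left nhdsWithin_le_nhds
  have h2 : Filter.Tendsto g (nhdsWithin q {z : ℂ | Gen z}) (nhds (g q)) :=
    hg.tendsto.mono_left nhdsWithin_le_nhds
  refine tendsto_nhds_unique h1 (h2.congr' ?_)
  filter_upwards [self_mem_nhdsWithin] with z hz
  exact (hfg z hz).symm

lemma qPoch_cont (x y : ℂ → ℂ) (hx : Continuous x) (hy : Continuous y) (n : ℕ) :
    Continuous fun z => qPoch (x z) (y z) n := by
  unfold qPoch; fun_prop

lemma IsR.bK_cont (h : IsR q N) (c n k : ℕ) (hn : n < N) :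
    ContinuousAt (fun z => bK z c n k) q := by
  unfold bK qBinom
  have := fun n => qPoch_cont (fun z => z) (fun z => z) continuous_id continuous_id n
  split_ifs with hk
  · refine ContinuousAt.mul (ContinuousAt.div (this n).continuousAt
      ((this _).mul (this _)).continuousAt ?_) (by fun_prop)
    exact mul_ne_zero (h.qPoch_ne _ (by omega)) (h.qPoch_ne _ (by omega))
  · fun_prop

lemma IsR.bK_sq_cont (h : IsR q N) (c n k : ℕ) (hn : n < N) :
    ContinuousAt (fun z => bK (z ^ 2) c n k) q :=
  ContinuousAt.comp (f := fun z : ℂ => z ^ 2) (g := fun z => bK z c n k)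
    (h.sq.bK_cont c n k hn) (by fun_prop)

lemma IsR.cK_cont (h : IsR q N) (n k : ℕ) (hn : n < N) :
    ContinuousAt (fun z => cK z n k) q := by
  unfold cK rr
  have hq := h.ne_zero
  have c1 := fun n => qPoch_cont (fun z => -z) (fun z => z) (by fun_prop) (by fun_prop) n
  have c2 := fun n => qPoch_cont (fun z => z ^ 2) (fun z => z ^ 2) (by fun_prop) (by fun_prop) n
  refine ContinuousAt.mul (ContinuousAt.mul (ContinuousAt.mul (by fun_prop) ?_) ?_) ?_
  · exact ContinuousAt.div (by fun_prop) (by fun_prop) (by positivity)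
  · exact ContinuousAt.div (c1 _).continuousAt (c1 _).continuousAt (h.qPoch_neg_ne _)
  · split_ifs
    · exact ContinuousAt.div (by fun_prop) (c2 _).continuousAt (h.sq.qPoch_ne _ (by omega))
    · exact ContinuousAt.div (by fun_prop) (c2 _).continuousAt (h.sq.qPoch_ne _ (by omega))
    · fun_prop

lemma IsR.hK_cont (h : IsR q N) (n k : ℕ) (hn : n < N) :
    ContinuousAt (fun z => hK z n k) q := by
  match n, k with
  | 0, 0 => simp only [hK]; fun_prop
  | 0, _ + 1 => simp only [hK]; fun_prop
  | _ + 1, 0 => simp only [hK]; fun_prop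
  | n + 1, k + 1 => exact h.cK_cont n k (by omega)

lemma kp_cont (x y : ℂ → ℕ → ℕ → ℂ)
    (hx : ∀ n k, n < N → ContinuousAt (fun z => x z n k) q)
    (hy : ∀ n k, n < N → ContinuousAt (fun z => y z n k) q) (n k : ℕ) (hn : n < N) :
    ContinuousAt (fun z => kp N (x z) (y z) n k) q := by
  unfold kp
  refine tendsto_finsetSum _ (fun j hj => ?_)
  exact (hx n j hn).mul (hy j k (Finset.mem_range.mp hj))

lemma IsR.J1 (h : IsR q N) (n k : ℕ) (hn : n < N) :
    kp N (bK q 1) (kp N (bK q 1) (cK q)) n k = kp N (cK q) (bK (q ^ 2) 1) n k := by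
  refine h.lim (fun z => kp N (bK z 1) (kp N (bK z 1) (cK z)) n k)
    (fun z => kp N (cK z) (bK (z ^ 2) 1) n k) ?_ ?_ ?_
  · exact kp_cont _ _ (h.bK_cont 1) (kp_cont _ _ (h.bK_cont 1) h.cK_cont) n k hn
  · exact kp_cont _ (fun z => bK (z ^ 2) 1) h.cK_cont (h.bK_sq_cont 1) n k hn
  · intro z hz
    exact change_base hz 1 N (cK z) (cK_zero_of_lt z) (cK_inter hz) n k hn

lemma IsR.J2 (h : IsR q N) (n k : ℕ) (hn : n < N) :
    kp N (bK q 0) (kp N (bK q 0) (hK q)) n k = kp N (hK q) (bK (q ^ 2) 0) n k := by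
  refine h.lim (fun z => kp N (bK z 0) (kp N (bK z 0) (hK z)) n k)
    (fun z => kp N (hK z) (bK (z ^ 2) 0) n k) ?_ ?_ ?_
  · exact kp_cont _ _ (h.bK_cont 0) (kp_cont _ _ (h.bK_cont 0) h.hK_cont) n k hn
  · exact kp_cont _ (fun z => bK (z ^ 2) 0) h.hK_cont (h.bK_sq_cont 0) n k hn
  · intro z hz
    exact change_base hz 0 N (hK z) (hK_zero_of_lt z) (hK_inter hz) n k hn

lemma IsR.J3 (h : IsR q N) (n : ℕ) (hn : n < N) :
    ∑ k ∈ Finset.range N, cK q n k / qPoch (-q) (q ^ 2) (k + 1) = 1 := by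
  refine h.lim (fun z => ∑ k ∈ Finset.range N, cK z n k / qPoch (-z) (z ^ 2) (k + 1))
    (fun _ => 1) ?_ (by fun_prop) (fun z hz => cK_sum hz N n hn)
  refine tendsto_finsetSum _ (fun j _ => ?_)
  exact ContinuousAt.div (h.cK_cont n j hn)
    (qPoch_cont (fun z => -z) (fun z => z ^ 2) (by fun_prop) (by fun_prop) _).continuousAt
    (h.qPoch_odd_ne _)

end rootlim

/-! ### Special values at roots of unity -/

section rootval
variable {q : ℂ} {N : ℕ}

lemma IsR.qPoch_N (h : IsR q N) : qPoch q q N = 0 := by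
  rw [qPoch, Finset.prod_eq_zero_iff]
  refine ⟨N - 1, Finset.mem_range.mpr (by have := h.pos; omega), ?_⟩
  rw [← pow_succ', Nat.sub_add_cancel h.pos, h.1.pow_eq_one, sub_self]

lemma IsR.prod_one_add (h : IsR q N) : ∏ j ∈ Finset.range N, (1 + q ^ j) = 2 := by
  have := X_pow_sub_C_eq_prod h.1 h.pos (one_pow N)
  have e := congrArg (Polynomial.eval (-1)) this
  simp only [Polynomial.eval_sub, Polynomial.eval_pow, Polynomial.eval_X, Polynomial.eval_C,
    Polynomial.eval_prod, mul_one, h.2.neg_one_pow] at e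
  have e2 : ∏ j ∈ Finset.range N, ((-1 : ℂ) - q ^ j) =
      ∏ j ∈ Finset.range N, (-1) * (1 + q ^ j) := by
    apply Finset.prod_congr rfl; intros; ring
  rw [e2, Finset.prod_mul_distrib, Finset.prod_const, Finset.card_range, h.2.neg_one_pow] at e
  linear_combination e

lemma IsR.binom_last (h : IsR q N) (x : ℕ) (hx : x < N) :
    qBinom q (N - 1) x * q ^ ((x + 1).choose 2) = (-1) ^ x := by
  have hq := h.ne_zero
  induction x with
  | zero =>
    simp [qBinom, qPoch_zero, h.qPoch_ne (N - 1) (by have := h.pos; omega)]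
  | succ x ih =>
    have ih := ih (by omega)
    rw [choose_two_succ, pow_add, pow_succ (-1 : ℂ), ← ih]
    unfold qBinom
    rw [if_pos (by omega), if_pos (by omega)]
    obtain ⟨d, rfl⟩ : ∃ d, N = x + 1 + d + 1 := ⟨N - x - 2, by omega⟩
    rw [show x + 1 + d + 1 - 1 - (x + 1) = d by omega, show x + 1 + d + 1 - 1 - x = d + 1 by omega,
      qPoch_succ, qPoch_succ]
    have a1 := h.qPoch_ne d (by omega)
    have a2 := h.qPoch_ne x (by omega)
    have a3 : 1 - q * q ^ d ≠ 0 := by rw [← pow_succ']; exact h.one_sub _ (by omega) (by omega)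
    have a4 : 1 - q * q ^ x ≠ 0 := by rw [← pow_succ']; exact h.one_sub _ (by omega) (by omega)
    have e : q * q ^ d * q ^ (x + 1) = 1 := by
      rw [← pow_succ', ← pow_add, ← h.1.pow_eq_one]; congr 1; omega
    generalize qPoch q q (x + 1 + d + 1 - 1) = P
    generalize q ^ (x + 1).choose 2 = R
    field_simp
    have e' : (1 - q * q ^ d) * q ^ (x + 1) = - (1 - q * q ^ x) := by
      rw [sub_mul, e]; ring
    linear_combination P * R * e'

lemma IsR.bK_last (h : IsR q N) (x : ℕ) (hx : x < N) :
    bK q 1 (N - 1) x = (-1) ^ x * q ^ (x * (x + 1) / 2) := by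
  rw [← h.binom_last x hx, bK, mul_assoc, ← pow_add]
  have e : (x + 1).choose 2 = x * (x + 1) / 2 := by
    rw [Nat.choose_two_right, Nat.add_sub_cancel, mul_comm]
  have e2 : x * (x + 1) / 2 * 2 = x * (x + 1) := Nat.div_mul_cancel (Nat.even_mul_succ_self x).two_dvd
  congr 2
  rw [e]
  nlinarith

lemma IsR.cK_last (h : IsR q N) (k : ℕ) (hk : k < N) :
    cK q (N - 1) k = if k = N - 1 then 2 else 0 := by
  split_ifs with hkN
  · subst hkN
    have hq := h.ne_zero
    unfold cK rr
    rw [if_pos le_rfl, if_pos (by omega)]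
    have hp := h.pos
    rw [show 2 * (N - 1) + 2 - (N - 1) = N - 1 + 2 by omega, Finset.Ico_self, Finset.prod_empty,
      Nat.sub_self, qPoch_zero, div_one, mul_one, Even.neg_one_pow ⟨_, rfl⟩, one_mul]
    have e1 : qPoch (-q) q (2 * (N - 1) + 1) = qPoch (-q) q (N - 1) * 2 := by
      rw [← h.prod_one_add, show 2 * (N - 1) + 1 = N - 1 + N by omega, qPoch, Finset.prod_range_add,
        qPoch]
      congr 1
      apply Finset.prod_congr rfl
      intro j _
      have : q * q ^ (N - 1 + j) = q ^ j := by
        rw [← pow_succ', show N - 1 + j + 1 = N + j by omega, pow_add, h.1.pow_eq_one, one_mul]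
      linear_combination this
    have e2 : q ^ ((N - 1).choose 2) * q ^ ((N - 1) * (N - 1 + 1)) =
        q ^ (N - 1) * q ^ (2 * (N - 1) * (N - 1)) := by
      obtain ⟨r, rfl⟩ := h.2
      rw [show 2 * r + 1 - 1 = 2 * r by omega]
      have : (2 * r).choose 2 + r * (2 * r + 1) = 2 * r * (2 * r) := by
        rw [Nat.choose_two_right]
        rcases r with _ | s
        · simp
        · rw [show 2 * (s + 1) * (2 * (s + 1) - 1) = 2 * ((s + 1) * (2 * s + 1)) by
            rw [show 2 * (s + 1) - 1 = 2 * s + 1 by omega]; ring,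
            Nat.mul_div_cancel_left _ (by norm_num)]
          ring
      have e3 : q ^ (r * (2 * r + 1)) = 1 := by rw [mul_comm, pow_mul, h.1.pow_eq_one, one_pow]
      rw [← one_mul (q ^ (2 * r) * _), ← e3, ← pow_add, ← pow_add, ← pow_add]
      rw [show r * (2 * r + 1) + (2 * r + 2 * (2 * r) * (2 * r)) =
        r * (2 * r + 1) + (r * (2 * r + 1)) + ((2 * r).choose 2 + 2 * r * (2 * r + 1)) by
          nlinarith, pow_add q (r * (2 * r + 1) + r * (2 * r + 1)),
        pow_add q (r * (2 * r + 1)) (r * (2 * r + 1)), e3, one_mul, one_mul]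
    rw [e1, e2, div_self (by positivity), mul_div_cancel_left₀ _ (h.qPoch_neg_ne _), one_mul]
  · unfold cK
    have : rr q (N - 1) k = 0 := by
      unfold rr
      split_ifs
      · rw [Finset.prod_eq_zero_iff]
        exact ⟨N, by rw [Finset.mem_Ico]; omega, by rw [h.1.pow_eq_one, sub_self]⟩
      · rfl
    simp [this]

end rootval

/-! ### Path sums -/

/-- Iterated application of kernels. -/
noncomputable def TT (N : ℕ) (A : ℕ → ℕ → ℕ → ℂ) (f : ℕ → ℂ) : ℕ → ℕ → ℂ
  | 0 => f
  | i + 1 => fun p => ∑ x ∈ Finset.range N, A i p x * TT N A f i x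

lemma pad_snoc_lt (M : ℕ) (n : Fin M → ℕ) (y j : ℕ) (hj : j < M) :
    pad (M + 1) (Fin.snoc n y) j = pad M n j := by
  unfold pad
  rw [dif_pos (by omega), dif_pos hj]
  exact Fin.snoc_castSucc (α := fun _ => ℕ) y n ⟨j, hj⟩

lemma pad_snoc_last (M : ℕ) (n : Fin M → ℕ) (y : ℕ) :
    pad (M + 1) (Fin.snoc n y) M = y := by
  unfold pad
  rw [dif_pos (by omega)]
  exact Fin.snoc_last (α := fun _ => ℕ) y n

lemma sum_snoc (N M : ℕ) (F : (Fin (M + 1) → ℕ) → ℂ) :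
    ∑ n ∈ Fintype.piFinset (fun _ : Fin (M + 1) => Finset.range N), F n =
      ∑ n ∈ Fintype.piFinset (fun _ : Fin M => Finset.range N), ∑ y ∈ Finset.range N,
        F (Fin.snoc n y) := by
  rw [← Finset.sum_product']
  refine Finset.sum_nbij' (fun n => (Fin.init n, n (Fin.last M)))
    (fun p => Fin.snoc p.1 p.2) ?_ ?_ ?_ ?_ ?_
  · intro n hn
    rw [Fintype.mem_piFinset] at hn
    simp only [Finset.mem_product, Fintype.mem_piFinset]
    exact ⟨fun i => hn _, hn _⟩
  · intro p hp
    simp only [Finset.mem_product, Fintype.mem_piFinset] at hp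
    rw [Fintype.mem_piFinset]
    intro i
    refine Fin.lastCases ?_ (fun j => ?_) i
    · rw [Fin.snoc_last]; exact hp.2
    · rw [Fin.snoc_castSucc]; exact hp.1 j
  · intro n _; exact Fin.snoc_init_self n
  · intro p _; simp
  · intro n _; simp

lemma path_sum (N : ℕ) (A : ℕ → ℕ → ℕ → ℂ) (f : ℕ → ℂ) (M : ℕ) : ∀ φ : ℕ → ℂ,
    ∑ n ∈ Fintype.piFinset (fun _ : Fin (M + 1) => Finset.range N),
      φ (pad (M + 1) n M) * (f (pad (M + 1) n 0) *
        ∏ i ∈ Finset.range M, A i (pad (M + 1) n (i + 1)) (pad (M + 1) n i)) =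
      ∑ x ∈ Finset.range N, φ x * TT N A f M x := by
  induction M with
  | zero =>
    intro φ
    rw [sum_snoc, Fintype.piFinset_of_isEmpty, Finset.univ_unique, Finset.sum_singleton]
    apply Finset.sum_congr rfl
    intro y _
    rw [pad_snoc_last 0]
    simp [TT]
  | succ M ih =>
    intro φ
    rw [sum_snoc, Finset.sum_comm]
    apply Finset.sum_congr rfl
    intro y _
    simp only [TT]
    rw [← ih (A M y), Finset.mul_sum]
    apply Finset.sum_congr rfl
    intro n _
    rw [pad_snoc_last, pad_snoc_lt (M + 1) n y 0 (by omega), Finset.prod_range_succ, pad_snoc_last,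
      pad_snoc_lt (M + 1) n y M (by omega)]
    have : ∏ i ∈ Finset.range M, A i (pad (M + 1 + 1) (Fin.snoc n y) (i + 1))
        (pad (M + 1 + 1) (Fin.snoc n y) i) =
        ∏ i ∈ Finset.range M, A i (pad (M + 1) n (i + 1)) (pad (M + 1) n i) := by
      apply Finset.prod_congr rfl
      intro i hi
      rw [Finset.mem_range] at hi
      rw [pad_snoc_lt (M + 1) n y i (by omega), pad_snoc_lt (M + 1) n y (i + 1) (by omega)]
    rw [this]
    ring

/-- The step kernel of both multi-sums. -/
noncomputable def AK (q : ℂ) (a i p x : ℕ) : ℂ :=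
  qBinom q (p + if i + 1 = a then 1 else 0) x * q ^ (x ^ 2 + if a ≤ i then x else 0)

lemma sum_Ico_ite (a M : ℕ) (f : ℕ → ℕ) :
    ∑ j ∈ Finset.Ico a M, f j = ∑ j ∈ Finset.range M, if a ≤ j then f j else 0 := by
  rw [← Finset.sum_filter]
  apply Finset.sum_congr _ (fun _ _ => rfl)
  ext j; simp only [Finset.mem_Ico, Finset.mem_filter, Finset.mem_range]; tauto

lemma prod_AK (q : ℂ) (a M : ℕ) (n : ℕ → ℕ) :
    ∏ i ∈ Finset.range M, AK q a i (n (i + 1)) (n i) =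
      q ^ (∑ j ∈ Finset.range M, (n j) ^ 2 + ∑ j ∈ Finset.Ico a M, n j) *
      ∏ i ∈ Finset.range M, qBinom q (n (i + 1) + if i + 1 = a then 1 else 0) (n i) := by
  simp only [AK]
  rw [Finset.prod_mul_distrib, Finset.prod_pow_eq_pow_sum, Finset.sum_add_distrib, sum_Ico_ite]
  ring

lemma Sterm_eq (M a : ℕ) (q : ℂ) (n : ℕ → ℕ) :
    Sterm (M + 2) a q n = ((-1) ^ (n M) * q ^ (n M * (n M + 1) / 2)) *
      (1 * ∏ i ∈ Finset.range M, AK q a i (n (i + 1)) (n i)) := by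
  rw [prod_AK, Sterm]
  simp only [Nat.add_sub_cancel]
  rw [add_assoc, pow_add]
  ring

lemma Lterm_eq (M a : ℕ) (q : ℂ) (n : ℕ → ℕ) :
    Lterm (M + 2) a q n = ((-1) ^ (n M) * (q ^ 2) ^ (n M * (n M + 1) / 2)) *
      ((qPoch (-q) (q ^ 2) (n 0 + if a = 0 then 1 else 0))⁻¹ *
        ∏ i ∈ Finset.range M, AK (q ^ 2) a i (n (i + 1)) (n i)) := by
  rw [prod_AK, Lterm]
  simp only [Nat.add_sub_cancel]
  rw [add_assoc, pow_add, ← pow_mul,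
    Nat.mul_div_cancel' (Nat.even_mul_succ_self (n M)).two_dvd, ← pow_mul,
    ← Finset.mul_sum, ← Finset.mul_sum, ← mul_add]
  ring

/-! ### Matrix assembly -/

/-- Truncation of a kernel to a matrix. -/
noncomputable def MM (N : ℕ) (x : ℕ → ℕ → ℂ) : Matrix (Fin N) (Fin N) ℂ :=
  Matrix.of fun i j => x i j

/-- The shift matrix. -/
noncomputable def Sh (N : ℕ) : Matrix (Fin N) (Fin N) ℂ :=
  Matrix.of fun i j => if (j : ℕ) = i + 1 then 1 else 0

/-- Truncation of a function to a vector. -/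
def vv (N : ℕ) (f : ℕ → ℂ) : Fin N → ℂ := fun i => f i

lemma MM_kp (N : ℕ) (x y : ℕ → ℕ → ℂ) : MM N (kp N x y) = MM N x * MM N y := by
  ext i j
  simp only [MM, Matrix.of_apply, Matrix.mul_apply, kp]
  exact (Fin.sum_univ_eq_sum_range (fun k => x i k * y k j) N).symm

lemma MM_mulVec (N : ℕ) (x : ℕ → ℕ → ℂ) (f : ℕ → ℂ) (i : Fin N) :
    (MM N x).mulVec (vv N f) i = ∑ j ∈ Finset.range N, x i j * f j := by
  simp only [MM, Matrix.mulVec, dotProduct, vv, Matrix.of_apply]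
  exact Fin.sum_univ_eq_sum_range (fun k => x i k * f k) N

lemma MM_congr (N : ℕ) (x y : ℕ → ℕ → ℂ) (h : ∀ n k, n < N → k < N → x n k = y n k) :
    MM N x = MM N y := by
  ext i j; exact h i j i.2 j.2

lemma Sh_mul (N : ℕ) (x : ℕ → ℕ → ℂ) (i j : Fin N) :
    (Sh N * MM N x) i j = if (i : ℕ) + 1 < N then x (i + 1) j else 0 := by
  simp only [Sh, MM, Matrix.mul_apply, Matrix.of_apply, ite_mul, one_mul, zero_mul]
  split_ifs with h
  · rw [Finset.sum_eq_single (⟨i + 1, h⟩ : Fin N)]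
    · simp
    · intro b _ hb
      rw [if_neg]
      intro h0; exact hb (Fin.ext h0)
    · intro h0; exact absurd (Finset.mem_univ _) h0
  · apply Finset.sum_eq_zero
    intro b _
    rw [if_neg]
    have := b.2
    omega

section asm
variable {q : ℂ} {N : ℕ}

lemma IsR.K1 (h : IsR q N) : MM N (bK q 1) ^ 2 * MM N (cK q) = MM N (cK q) * MM N (bK (q ^ 2) 1) := by
  rw [pow_two, mul_assoc, ← MM_kp, ← MM_kp, ← MM_kp]
  exact MM_congr _ _ _ (fun n k hn _ => h.J1 n k hn)

lemma IsR.K2 (h : IsR q N) : MM N (bK q 0) ^ 2 * MM N (hK q) = MM N (hK q) * MM N (bK (q ^ 2) 0) := by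
  rw [pow_two, mul_assoc, ← MM_kp, ← MM_kp, ← MM_kp]
  exact MM_congr _ _ _ (fun n k hn _ => h.J2 n k hn)

lemma pow_inter {R : Type*} [Monoid R] (B C D : R) (h : B ^ 2 * C = C * D) (r : ℕ) :
    B ^ (2 * r) * C = C * D ^ r := by
  induction r with
  | zero => simp
  | succ r ih =>
    rw [show 2 * (r + 1) = 2 * r + 2 by ring, pow_add, mul_assoc, h, ← mul_assoc, ih, mul_assoc,
      pow_succ]

lemma IsR.K3 (h : IsR q N) : Sh N * MM N (hK q) = MM N (cK q) * Sh N := by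
  ext i j
  rw [Sh_mul]
  simp only [MM, Sh, Matrix.mul_apply, Matrix.of_apply, mul_ite, mul_one, mul_zero]
  obtain ⟨j, hj⟩ := j
  simp only
  cases j with
  | zero =>
    simp [hK]
  | succ k =>
    rw [Finset.sum_eq_single (⟨k, by omega⟩ : Fin N)]
    · simp only [if_true]
      split_ifs with hi
      · rfl
      · have : (i : ℕ) = N - 1 := by have := i.2; omega
        rw [this, h.cK_last k (by omega), if_neg (by omega)]
    · intro b _ hb
      rw [if_neg]
      intro h0
      exact hb (Fin.ext (by simp only; omega))
    · intro h0; exact absurd (Finset.mem_univ _) h0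

lemma IsR.Cg (h : IsR q N) :
    (MM N (cK q)).mulVec (vv N fun x => (qPoch (-q) (q ^ 2) (x + 1))⁻¹) = vv N fun _ => 1 := by
  ext i
  rw [MM_mulVec]
  simp only [← div_eq_mul_inv, vv]
  exact h.J3 i i.2

lemma IsR.Hg (h : IsR q N) :
    (MM N (hK q)).mulVec (vv N fun x => (qPoch (-q) (q ^ 2) x)⁻¹) = vv N fun _ => 1 := by
  ext i
  rw [MM_mulVec]
  obtain ⟨i, hi⟩ := i
  simp only [vv]
  obtain ⟨K, rfl⟩ : ∃ K, N = K + 1 := ⟨N - 1, by omega⟩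
  rw [Finset.sum_range_succ']
  cases i with
  | zero => simp [hK, qPoch_zero]
  | succ i =>
    have := h.J3 i (by omega)
    rw [Finset.sum_range_succ, cK_zero_of_lt q i K (by omega)] at this
    simpa [hK, div_eq_mul_inv] using this

lemma IsR.AK_lt (a i : ℕ) (hi : i + 1 < a) : MM N (AK q a i) = MM N (bK q 0) := by
  apply MM_congr
  intro n k _ _
  simp [AK, bK, hi.ne, show ¬ a ≤ i by omega]

lemma IsR.AK_ge (a i : ℕ) (hi : a ≤ i) : MM N (AK q a i) = MM N (bK q 1) := by
  apply MM_congr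
  intro n k _ _
  simp [AK, bK, hi, show i + 1 ≠ a by omega]

lemma IsR.AK_eq (h : IsR q N) (i : ℕ) : MM N (AK q (i + 1) i) = Sh N * MM N (bK q 0) := by
  ext n k
  rw [Sh_mul]
  simp only [MM, Matrix.of_apply, AK, bK, if_true, show ¬ i + 1 ≤ i by omega, if_false, zero_mul]
  split_ifs with hn
  · rfl
  · have : (n : ℕ) + 1 = N := by have := n.2; omega
    rw [this, qBinom, h.qPoch_N]
    simp

lemma TT_succ (A : ℕ → ℕ → ℕ → ℂ) (f : ℕ → ℂ) (i : ℕ) :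
    vv N (TT N A f (i + 1)) = (MM N (A i)).mulVec (vv N (TT N A f i)) := by
  ext x
  rw [MM_mulVec]; rfl

lemma IsR.TT_lt (a : ℕ) (f : ℕ → ℂ) (i : ℕ) (hi : i < a) :
    vv N (TT N (AK q a) f i) = (MM N (bK q 0) ^ i).mulVec (vv N f) := by
  induction i with
  | zero => simp [TT]
  | succ i ih =>
    rw [TT_succ, ih (by omega), IsR.AK_lt a i hi, Matrix.mulVec_mulVec, ← pow_succ']

lemma IsR.TT_eq (h : IsR q N) (a : ℕ) (f : ℕ → ℂ) :
    vv N (TT N (AK q (a + 1)) f (a + 1)) = (Sh N * MM N (bK q 0) ^ (a + 1)).mulVec (vv N f) := by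
  rw [TT_succ, IsR.TT_lt _ _ _ (by omega), h.AK_eq, Matrix.mulVec_mulVec, mul_assoc, ← pow_succ']

lemma IsR.TT_ge (a : ℕ) (f : ℕ → ℂ) (i : ℕ) :
    vv N (TT N (AK q a) f (a + i)) = (MM N (bK q 1) ^ i).mulVec (vv N (TT N (AK q a) f a)) := by
  induction i with
  | zero => simp
  | succ i ih =>
    rw [← add_assoc, TT_succ, ih, IsR.AK_ge a (a + i) (by omega), Matrix.mulVec_mulVec, ← pow_succ']

lemma IsR.final_sum (h : IsR q N) (a r : ℕ) (f : ℕ → ℂ) :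
    ∑ x ∈ Finset.range N, ((-1) ^ x * q ^ (x * (x + 1) / 2)) * TT N (AK q a) f (a + r) x =
      (MM N (bK q 1) ^ (r + 1)).mulVec (vv N (TT N (AK q a) f a))
        ⟨N - 1, Nat.sub_lt h.pos one_pos⟩ := by
  rw [pow_succ', ← Matrix.mulVec_mulVec, ← IsR.TT_ge, MM_mulVec]
  apply Finset.sum_congr rfl
  intro x hx
  rw [h.bK_last x (Finset.mem_range.mp hx)]

lemma IsR.mid (h : IsR q N) (a : ℕ) :
    vv N (TT N (AK q (2 * a)) (fun _ => 1) (2 * a)) = (MM N (cK q)).mulVec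
      (vv N (TT N (AK (q ^ 2) a)
        (fun x => (qPoch (-q) (q ^ 2) (x + if a = 0 then 1 else 0))⁻¹) a)) := by
  cases a with
  | zero =>
    simp only [if_true, mul_zero, TT]
    exact h.Cg.symm
  | succ a =>
    rw [h.sq.TT_eq, show 2 * (a + 1) = (2 * a + 1) + 1 by ring, h.TT_eq,
      show 2 * a + 1 + 1 = 2 * (a + 1) by ring]
    simp only [Nat.add_eq_zero_iff, one_ne_zero, and_false, if_false, add_zero]
    rw [← h.Hg, Matrix.mulVec_mulVec, Matrix.mulVec_mulVec, mul_assoc,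
      pow_inter _ _ _ h.K2 (a + 1), ← mul_assoc, h.K3, mul_assoc]

lemma IsR.C_last (h : IsR q N) (v : Fin N → ℂ) :
    (MM N (cK q)).mulVec v ⟨N - 1, Nat.sub_lt h.pos one_pos⟩ =
      2 * v ⟨N - 1, Nat.sub_lt h.pos one_pos⟩ := by
  simp only [MM, Matrix.mulVec, dotProduct, Matrix.of_apply]
  rw [Finset.sum_eq_single (⟨N - 1, Nat.sub_lt h.pos one_pos⟩ : Fin N)]
  · rw [h.cK_last _ (Nat.sub_lt h.pos one_pos), if_pos rfl]
  · intro b _ hb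
    rw [h.cK_last _ b.2, if_neg (fun h0 => hb (Fin.ext h0)), zero_mul]
  · intro h0; exact absurd (Finset.mem_univ _) h0

lemma IsR.main (h : IsR q N) (a s : ℕ) :
    ∑ x ∈ Finset.range N, ((-1) ^ x * q ^ (x * (x + 1) / 2)) *
        TT N (AK q (2 * a)) (fun _ => 1) (2 * a + (2 * s + 1)) x =
      2 * ∑ x ∈ Finset.range N, ((-1) ^ x * (q ^ 2) ^ (x * (x + 1) / 2)) *
        TT N (AK (q ^ 2) a)
          (fun x => (qPoch (-q) (q ^ 2) (x + if a = 0 then 1 else 0))⁻¹) (a + s) x := by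
  rw [h.final_sum, h.sq.final_sum, h.mid, Matrix.mulVec_mulVec,
    show 2 * s + 1 + 1 = 2 * (s + 1) by ring, pow_inter _ _ _ h.K1 (s + 1),
    ← Matrix.mulVec_mulVec, h.C_last]

end asm

theorem stmt18 (m a : ℕ) (hm : 2 ≤ m) (ha : a ≤ m - 2) (N : ℕ) (hNodd : Odd N) (q : ℂ)
    (hqN : q ^ N = 1) (hprim : ∀ j : ℕ, 1 ≤ j → j < N → q ^ j ≠ 1) :
    (∑ n ∈ Fintype.piFinset (fun _ : Fin (2 * m - 2) => Finset.range N),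
        Sterm (2 * m - 1) (2 * a) q (pad (2 * m - 2) n)) =
      2 * ∑ n ∈ Fintype.piFinset (fun _ : Fin (m - 1) => Finset.range N),
        Lterm m a q (pad (m - 1) n) := by
  have h : IsR q N := ⟨IsPrimitiveRoot.mk_of_lt q hNodd.pos hqN
    (fun l h1 h2 => hprim l h1 h2), hNodd⟩
  obtain ⟨s, rfl⟩ : ∃ s, m = a + s + 2 := ⟨m - 2 - a, by omega⟩
  rw [show 2 * (a + s + 2) - 2 = (2 * a + (2 * s + 1)) + 1 by omega,
    show 2 * (a + s + 2) - 1 = (2 * a + (2 * s + 1)) + 2 by omega,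
    show a + s + 2 - 1 = a + s + 1 by omega]
  simp only [Sterm_eq, Lterm_eq]
  have e1 := path_sum N (AK q (2 * a)) (fun _ => 1) (2 * a + (2 * s + 1))
    (fun x => (-1) ^ x * q ^ (x * (x + 1) / 2))
  have e2 := path_sum N (AK (q ^ 2) a)
    (fun x => (qPoch (-q) (q ^ 2) (x + if a = 0 then 1 else 0))⁻¹) (a + s)
    (fun x => (-1) ^ x * (q ^ 2) ^ (x * (x + 1) / 2))
  rw [e1, e2]
  exact h.main a s
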